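/- With $K$ as in the context, define $H(x_1,x_2,y_1,y_2) = \frac12(x_1^2+y_1^2) + K(x_2,y_2)$ and the vector field $Y_1(z) = \big(\frac12 x_1,\ \frac14\sin\frac{x_2}{2},\ \frac12 y_1,\ (y_2-\Lambda_3)(1-\frac18\cos\frac{x_2}{2})\big)$ at $z=(x_1,x_2,y_1,y_2)$. Then at every point $z$ with $0 \le x_2 \le 4\pi$ and $y_2 > 1$ that is different from the three points $(0,0,0,\Lambda_3)$, $(0,2\pi,0,\Lambda_3)$, $(0,4\pi,0,\Lambda_3)$, one has $\langle \nabla H(z), Y_1(z)\rangle > 0$. -/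

import Mathlib

/-- The Kepler effective Hamiltonian `H₂(y) = -1/(2y²) - y`. -/
noncomputable def H2K (y : ℝ) : ℝ := -(1 / (2 * y ^ 2)) - y

/-- `F(x,y) = ½(y - Λ₃)² - cos(x/2) + B`. -/
noncomputable def Ffun (Λ3 B : ℝ) (x y : ℝ) : ℝ :=
  (y - Λ3) ^ 2 / 2 - Real.cos (x / 2) + B

/-- The interpolated function `K(x,y) = (1 - f(y)) H₂(y) + f(y) F(x,y)`. -/
noncomputable def Kfun (Λ3 B : ℝ) (f : ℝ → ℝ) (x y : ℝ) : ℝ :=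
  (1 - f y) * H2K y + f y * Ffun Λ3 B x y

/-- The Hamiltonian `H(x₁,x₂,y₁,y₂) = ½(x₁² + y₁²) + K(x₂,y₂)` on `ℝ⁴`,
with coordinates ordered as `(x₁, x₂, y₁, y₂)`. -/
noncomputable def Hfull (Λ3 B : ℝ) (f : ℝ → ℝ) (z : ℝ × ℝ × ℝ × ℝ) : ℝ :=
  (z.1 ^ 2 + z.2.2.1 ^ 2) / 2 + Kfun Λ3 B f z.2.1 z.2.2.2

/-! `dH(Y₁)` is the sum of `x₁²/2`, `y₁²/2`, `f(y₂) sin²(x₂/2)/8` and the product of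
`∂K/∂y₂ · (y₂ - Λ₃)` with the positive factor `1 - cos(x₂/2)/8`. Off `y₂ = Λ₃` the last term is
already positive: below `Λ₃`, `∂K/∂y₂` is `f'(y₂)(F - H₂)`, which is nonpositive because the bound
on `B` forces `F ≤ H₂` where `f` varies, plus a convex combination of the negative numbers
`1/y₂³ - 1` and `y₂ - Λ₃`; above `Λ₃`, it is just `y₂ - Λ₃`. On `y₂ = Λ₃` only the squares remain,
with `f(y₂) = 1`, and they vanish together exactly when `x₁ = y₁ = 0` and `x₂ ∈ 2πℤ`. -/

/-- A monotone cutoff function: it climbs from `0` on `(-∞, a]` to `1` on `[b, ∞)`. Regularity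
is not part of the structure; it is assumed separately, at the point of interest. -/
structure IsMonotoneCutoff (f : ℝ → ℝ) (a b : ℝ) : Prop where
  monotone : Monotone f
  eq_zero : ∀ y, y ≤ a → f y = 0
  eq_one : ∀ y, b ≤ y → f y = 1

namespace IsMonotoneCutoff

variable {f : ℝ → ℝ} {a b y : ℝ}

lemma nonneg (hf : IsMonotoneCutoff f a b) (y : ℝ) : 0 ≤ f y :=
  calc 0 = f (min y a) := (hf.eq_zero _ (min_le_right y a)).symm
    _ ≤ f y := hf.monotone (min_le_left y a)

lemma le_one (hf : IsMonotoneCutoff f a b) (y : ℝ) : f y ≤ 1 :=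
  calc f y ≤ f (max y b) := hf.monotone (le_max_left y b)
    _ = 1 := hf.eq_one _ (le_max_right y b)

lemma deriv_eq_zero_of_notMem_Icc (hf : IsMonotoneCutoff f a b) (hy : y ∉ Set.Icc a b) :
    deriv f y = 0 := by
  rcases lt_or_ge y a with hya | hay
  · have hf_zero : f =ᶠ[nhds y] fun _ ↦ 0 := by
      filter_upwards [Iio_mem_nhds hya] with t ht using hf.eq_zero t (le_of_lt ht)
    rw [hf_zero.deriv_eq, deriv_const]
  · have hby : b < y := lt_of_not_ge fun hyb ↦ hy ⟨hay, hyb⟩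
    have hf_one : f =ᶠ[nhds y] fun _ ↦ 1 := by
      filter_upwards [Ioi_mem_nhds hby] with t ht using hf.eq_one t (le_of_lt ht)
    rw [hf_one.deriv_eq, deriv_const]

end IsMonotoneCutoff

lemma fderiv_prod_apply {𝕜 F : Type*} [NontriviallyNormedField 𝕜] [NormedAddCommGroup F]
    [NormedSpace 𝕜 F] {g : 𝕜 × 𝕜 → F} {x y : 𝕜} (hg : DifferentiableAt 𝕜 g (x, y)) (v w : 𝕜) :
    fderiv 𝕜 g (x, y) (v, w) =
      v • deriv (fun s ↦ g (s, y)) x + w • deriv (fun t ↦ g (x, t)) y := by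
  have hx : HasDerivAt (fun s ↦ g (s, y)) (fderiv 𝕜 g (x, y) (1, 0)) x :=
    hg.hasFDerivAt.comp_hasDerivAt x ((hasDerivAt_id x).prodMk (hasDerivAt_const x y))
  have hy : HasDerivAt (fun t ↦ g (x, t)) (fderiv 𝕜 g (x, y) (0, 1)) y :=
    hg.hasFDerivAt.comp_hasDerivAt y ((hasDerivAt_const y x).prodMk (hasDerivAt_id y))
  rw [hx.deriv, hy.deriv, ← map_smul, ← map_smul, ← map_add]
  simp

lemma int_mul_two_pi_eq_of_nonneg_of_le_four_pi {n : ℤ} (h0 : 0 ≤ n * (2 * Real.pi))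
    (h4 : n * (2 * Real.pi) ≤ 4 * Real.pi) :
    n * (2 * Real.pi) = 0 ∨ n * (2 * Real.pi) = 2 * Real.pi ∨ n * (2 * Real.pi) = 4 * Real.pi := by
  have hn0 : (0 : ℝ) ≤ n := nonneg_of_mul_nonneg_left h0 Real.two_pi_pos
  have hn2 : (n : ℝ) ≤ 2 := le_of_mul_le_mul_right (by linarith) Real.two_pi_pos
  norm_cast at hn0 hn2
  interval_cases n
  · exact .inl (by norm_num)
  · exact .inr (.inl (by norm_num))
  · exact .inr (.inr (by push_cast; ring))

lemma hasDerivAt_H2K {y : ℝ} (hy : y ≠ 0) : HasDerivAt H2K (1 / y ^ 3 - 1) y := by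
  have hden : HasDerivAt (fun t : ℝ ↦ 2 * t ^ 2) (4 * y) y :=
    ((hasDerivAt_pow 2 y).const_mul 2).congr_deriv (by norm_num; ring)
  have hH2K : H2K = fun t ↦ -(2 * t ^ 2)⁻¹ - t := by
    funext t
    rw [H2K, one_div]
  rw [hH2K]
  exact ((hden.fun_inv (by positivity)).fun_neg.sub (hasDerivAt_id y)).congr_deriv
    (by field_simp; ring)

section Hamiltonian

variable {Λ3 B : ℝ} {f : ℝ → ℝ} {a b x y : ℝ}

lemma hasDerivAt_Ffun_left : HasDerivAt (fun s ↦ Ffun Λ3 B s y) (Real.sin (x / 2) / 2) x := by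
  have hcos : HasDerivAt (fun s : ℝ ↦ Real.cos (s / 2)) (-Real.sin (x / 2) * (1 / 2)) x :=
    ((hasDerivAt_id x).div_const 2).cos
  exact ((hcos.const_sub _).add_const B).congr_deriv (by ring)

lemma hasDerivAt_Ffun_right : HasDerivAt (Ffun Λ3 B x) (y - Λ3) y := by
  have hsq : HasDerivAt (fun t ↦ (t - Λ3) ^ 2 / 2) (y - Λ3) y :=
    ((((hasDerivAt_id y).sub_const Λ3).fun_pow 2).div_const 2).congr_deriv (by simp)
  exact (hsq.sub_const _).add_const B

lemma Ffun_le_H2K (hy : (y - Λ3) ^ 2 / 2 + B + 1 + 1 / (2 * y ^ 2) + y ≤ 0) :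
    Ffun Λ3 B x y ≤ H2K y := by
  unfold Ffun H2K
  linarith [Real.neg_one_le_cos (x / 2)]

lemma deriv_Kfun_left :
    deriv (fun s ↦ Kfun Λ3 B f s y) x = f y * (Real.sin (x / 2) / 2) :=
  ((hasDerivAt_Ffun_left.const_mul (f y)).const_add _).deriv

lemma deriv_Kfun_right (hf : DifferentiableAt ℝ f y) (hy : y ≠ 0) :
    deriv (Kfun Λ3 B f x) y =
      deriv f y * (Ffun Λ3 B x y - H2K y) + ((1 - f y) * (1 / y ^ 3 - 1) + f y * (y - Λ3)) := by
  have hK := ((hf.hasDerivAt.const_sub 1).mul (hasDerivAt_H2K hy)).add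
    (hf.hasDerivAt.mul (hasDerivAt_Ffun_right (Λ3 := Λ3) (B := B) (x := x)))
  exact (hK.congr_deriv (by ring)).deriv

lemma deriv_Kfun_right_of_lt (hf : DifferentiableAt ℝ f y) (hcut : IsMonotoneCutoff f a b)
    (hy : y ≠ 0) (hby : b < y) : deriv (Kfun Λ3 B f x) y = y - Λ3 := by
  rw [deriv_Kfun_right hf hy, hcut.deriv_eq_zero_of_notMem_Icc fun h ↦ h.2.not_gt hby,
    hcut.eq_one y hby.le]
  ring

lemma deriv_Kfun_right_neg (hf : DifferentiableAt ℝ f y) (hcut : IsMonotoneCutoff f a b)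
    (hFH : y ∈ Set.Icc a b → Ffun Λ3 B x y ≤ H2K y) (hy : 1 < y) (hyΛ : y < Λ3) :
    deriv (Kfun Λ3 B f x) y < 0 := by
  have htransition : deriv f y * (Ffun Λ3 B x y - H2K y) ≤ 0 := by
    by_cases hmem : y ∈ Set.Icc a b
    · exact mul_nonpos_of_nonneg_of_nonpos hcut.monotone.deriv_nonneg (sub_nonpos.2 (hFH hmem))
    · rw [hcut.deriv_eq_zero_of_notMem_Icc hmem, zero_mul]
  have hkepler : 1 / y ^ 3 - 1 < 0 :=
    sub_neg.2 ((div_lt_one (by positivity)).2 (one_lt_pow₀ hy three_ne_zero))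
  have hconvex : (1 - f y) * (1 / y ^ 3 - 1) + f y * (y - Λ3) < 0 :=
    convex_Iio (0 : ℝ) hkepler (sub_neg.2 hyΛ) (sub_nonneg.2 (hcut.le_one y)) (hcut.nonneg y)
      (sub_add_cancel 1 (f y))
  rw [deriv_Kfun_right hf (by positivity)]
  exact add_neg_of_nonpos_of_neg htransition hconvex

lemma deriv_Kfun_right_mul_sub_pos (hf : DifferentiableAt ℝ f y) (hcut : IsMonotoneCutoff f a b)
    (hb : b ≤ Λ3) (hFH : y ∈ Set.Icc a b → Ffun Λ3 B x y ≤ H2K y) (hy : 1 < y) (hyΛ : y ≠ Λ3) :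
    0 < deriv (Kfun Λ3 B f x) y * (y - Λ3) := by
  rcases hyΛ.lt_or_gt with hlt | hgt
  · exact mul_pos_of_neg_of_neg (deriv_Kfun_right_neg hf hcut hFH hy hlt) (sub_neg.2 hlt)
  · rw [deriv_Kfun_right_of_lt hf hcut (by positivity) (hb.trans_lt hgt)]
    exact mul_self_pos.2 (sub_ne_zero.2 hyΛ)

lemma differentiableAt_uncurry_Kfun (hf : DifferentiableAt ℝ f y) (hy : y ≠ 0) :
    DifferentiableAt ℝ (fun p : ℝ × ℝ ↦ Kfun Λ3 B f p.1 p.2) (x, y) := by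
  have hH2K : DifferentiableAt ℝ H2K y := (hasDerivAt_H2K hy).differentiableAt
  unfold Kfun Ffun
  fun_prop

lemma fderiv_Hfull_apply {z : ℝ × ℝ × ℝ × ℝ} (hf : DifferentiableAt ℝ f z.2.2.2)
    (hz : z.2.2.2 ≠ 0) (v : ℝ × ℝ × ℝ × ℝ) :
    fderiv ℝ (Hfull Λ3 B f) z v = z.1 * v.1 + f z.2.2.2 * (Real.sin (z.2.1 / 2) / 2) * v.2.1 +
      z.2.2.1 * v.2.2.1 + deriv (Kfun Λ3 B f z.2.1) z.2.2.2 * v.2.2.2 := by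
  have hK := differentiableAt_uncurry_Kfun (Λ3 := Λ3) (B := B) (x := z.2.1) hf hz
  have hid : HasFDerivAt (fun w : ℝ × ℝ × ℝ × ℝ ↦ w) (.id ℝ _) z := hasFDerivAt_id z
  have hx₁ := hid.fst
  have hx₂ := hid.snd.fst
  have hy₁ := hid.snd.snd.fst
  have hy₂ := hid.snd.snd.snd
  have hKz := hK.hasFDerivAt.comp z (hx₂.prodMk hy₂)
  have hH : HasFDerivAt (Hfull Λ3 B f) _ z :=
    (((HasFDerivAt.pow hx₁ 2).add (HasFDerivAt.pow hy₁ 2)).mul_const (2⁻¹ : ℝ)).add hKz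
  rw [hH.fderiv]
  simp only [Nat.add_one_sub_one, pow_one, nsmul_eq_mul, Nat.cast_ofNat,
    ContinuousLinearMap.comp_id, smul_add, add_apply, smul_apply, smul_eq_mul,
    ContinuousLinearMap.comp_apply, ContinuousLinearMap.coe_fst', ContinuousLinearMap.coe_snd',
    ContinuousLinearMap.prod_apply, fderiv_prod_apply hK, deriv_Kfun_left]
  ring

/-- The Liouville vector field `Y₁` of Section 5.3, in the coordinates `(x₁, x₂, y₁, y₂)`. -/
noncomputable def liouvilleField (Λ3 : ℝ) (z : ℝ × ℝ × ℝ × ℝ) : ℝ × ℝ × ℝ × ℝ :=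
  (z.1 / 2, Real.sin (z.2.1 / 2) / 4, z.2.2.1 / 2,
    (z.2.2.2 - Λ3) * (1 - Real.cos (z.2.1 / 2) / 8))

lemma fderiv_Hfull_liouvilleField {z : ℝ × ℝ × ℝ × ℝ} (hf : DifferentiableAt ℝ f z.2.2.2)
    (hz : z.2.2.2 ≠ 0) :
    fderiv ℝ (Hfull Λ3 B f) z (liouvilleField Λ3 z) =
      z.1 ^ 2 / 2 + z.2.2.1 ^ 2 / 2 + f z.2.2.2 * Real.sin (z.2.1 / 2) ^ 2 / 8 +
        deriv (Kfun Λ3 B f z.2.1) z.2.2.2 * (z.2.2.2 - Λ3) *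
          (1 - Real.cos (z.2.1 / 2) / 8) := by
  rw [fderiv_Hfull_apply hf hz]
  unfold liouvilleField
  ring

end Hamiltonian

theorem stmt_12_general {Λ3 B a b : ℝ} {f : ℝ → ℝ} {z : ℝ × ℝ × ℝ × ℝ}
    (hf : DifferentiableAt ℝ f z.2.2.2) (hcut : IsMonotoneCutoff f a b) (hb : b ≤ Λ3)
    (hFH : z.2.2.2 ∈ Set.Icc a b → Ffun Λ3 B z.2.1 z.2.2.2 ≤ H2K z.2.2.2)
    (hy₂ : 1 < z.2.2.2) (hz : ∀ n : ℤ, z ≠ (0, n * (2 * Real.pi), 0, Λ3)) :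
    0 < fderiv ℝ (Hfull Λ3 B f) z (liouvilleField Λ3 z) := by
  obtain ⟨x₁, x₂, y₁, y₂⟩ := z
  dsimp only at hf hFH hy₂
  rw [fderiv_Hfull_liouvilleField hf (by positivity)]
  dsimp only
  have hfactor : 0 < 1 - Real.cos (x₂ / 2) / 8 := by linarith [Real.cos_le_one (x₂ / 2)]
  rcases eq_or_ne y₂ Λ3 with rfl | hyΛ
  · rw [sub_self, mul_zero, zero_mul, add_zero, hcut.eq_one y₂ hb, one_mul]
    contrapose! hz with hsum
    obtain ⟨hx₁, hy₁, hsin⟩ : x₁ ^ 2 = 0 ∧ y₁ ^ 2 = 0 ∧ Real.sin (x₂ / 2) ^ 2 = 0 := by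
      refine ⟨?_, ?_, ?_⟩ <;> linarith [sq_nonneg x₁, sq_nonneg y₁, sq_nonneg (Real.sin (x₂ / 2))]
    rw [sq_eq_zero_iff] at hx₁ hy₁ hsin
    obtain ⟨n, hn⟩ := Real.sin_eq_zero_iff.1 hsin
    have hx₂ : x₂ = n * (2 * Real.pi) := by linarith
    exact ⟨n, by rw [hx₁, hx₂, hy₁]⟩
  · have hK := mul_pos (deriv_Kfun_right_mul_sub_pos hf hcut hb hFH hy₂ hyΛ) hfactor
    have hfy := hcut.nonneg y₂
    positivity

/-- Transversality of the Liouville vector field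
`Y₁(z) = (½x₁, ¼sin(x₂/2), ½y₁, (y₂-Λ₃)(1 - ⅛cos(x₂/2)))` (Section 5.3 of the paper):
`⟨∇H(z), Y₁(z)⟩ = dH(Y₁)(z) > 0` at every point with `0 ≤ x₂ ≤ 4π`, `y₂ > 1` other than
the three critical points. -/
theorem stmt_12 (Λ2 Λ3 ε0 B : ℝ) (f : ℝ → ℝ)
    (hΛ2 : 1 < Λ2) (hΛ23 : Λ2 < Λ3)
    (hε0 : 0 < ε0) (hε0' : ε0 < (Λ3 - Λ2) / 2)
    (hB : ∀ y ∈ Set.Icc (Λ2 + ε0) (Λ2 + 2 * ε0),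
      (y - Λ3) ^ 2 / 2 + B + 1 + 1 / (2 * y ^ 2) + y ≤ 0)
    (hf : ContDiff ℝ (⊤ : ℕ∞) f) (hfmono : Monotone f)
    (hfrange : ∀ y, f y ∈ Set.Icc (0 : ℝ) 1)
    (hf0 : ∀ y, y ≤ Λ2 + ε0 → f y = 0)
    (hf1 : ∀ y, Λ2 + 2 * ε0 ≤ y → f y = 1) :
    ∀ z : ℝ × ℝ × ℝ × ℝ, 0 ≤ z.2.1 → z.2.1 ≤ 4 * Real.pi → 1 < z.2.2.2 →
      z ≠ (0, 0, 0, Λ3) → z ≠ (0, 2 * Real.pi, 0, Λ3) → z ≠ (0, 4 * Real.pi, 0, Λ3) →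
      0 < fderiv ℝ (Hfull Λ3 B f) z
        (z.1 / 2, Real.sin (z.2.1 / 2) / 4, z.2.2.1 / 2,
          (z.2.2.2 - Λ3) * (1 - Real.cos (z.2.1 / 2) / 8)) := by
  intro z hx0 hx4 hy₂ hz0 hz2 hz4
  refine stmt_12_general (hf.differentiable (by simp) _) ⟨hfmono, hf0, hf1⟩ (by linarith)
    (fun hy ↦ Ffun_le_H2K (hB _ hy)) hy₂ ?_
  rintro n rfl
  rcases int_mul_two_pi_eq_of_nonneg_of_le_four_pi hx0 hx4 with h | h | h
  exacts [hz0 (by rw [h]), hz2 (by rw [h]), hz4 (by rw [h])]
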